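/- arXiv:1209.5904 — 6 statements merged into one kernel-verified Lean document; each statement's English description precedes it below -/
import Mathlib

section
/- Let α ∈ (0,1], let d ∈ ℕ with d > α, let i ∈ {1,…,d}, and let x, y ∈ ℝ^d satisfy xᵢ > 0, yᵢ > 0 and x ≠ y. Then |x̂ − y|^(d−α) − |x − y|^(d−α) ≤ max(2, 2(d−α)) · |x − x̂| · |x̂ − y|^(d−α−1). -/
/-! The geometry enters only through the triangle inequality `b - a ≤ c` for `a = |x - y|`,
`b = |x̂ - y|`, `c = |x - x̂|`, and through `b > 0`, which holds because the `i`-th coordinate of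
`x̂ - y` is `-(xᵢ + yᵢ) < 0`. Dividing by `b ^ p` with `p = d - α` reduces the claim to
`1 - t ^ p ≤ max 1 p * (1 - t)` for `t = a / b ∈ [0, 1]`: this is Bernoulli's inequality if `1 ≤ p`,
and `t ≤ t ^ p` if `p ≤ 1`. When `a ≥ b` the left-hand side is nonpositive. The factor `2` is slack:
the argument gives the bound with `max 1 p`. -/

/-- The reflection `x̂ = x − 2xᵢeᵢ` of `x ∈ ℝ^d` across the hyperplane `{y : yᵢ = 0}`. -/
noncomputable def reflectHyp (d : ℕ) (i : Fin d) (x : EuclideanSpace ℝ (Fin d)) :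
    EuclideanSpace ℝ (Fin d) :=
  x - (2 * x i) • EuclideanSpace.single i (1 : ℝ)

lemma one_sub_rpow_le {t p : ℝ} (ht0 : 0 ≤ t) (ht1 : t ≤ 1) :
    1 - t ^ p ≤ max 1 p * (1 - t) := by
  rcases le_total 1 p with h | h
  · have := one_add_mul_self_le_rpow_one_add (s := t - 1) (by linarith) h
    rw [max_eq_right h]
    rw [add_sub_cancel] at this
    linarith
  · rw [max_eq_left h]
    have := Real.self_le_rpow_of_le_one ht0 ht1 h
    linarith

lemma rpow_sub_rpow_le {a b c p : ℝ} (ha : 0 ≤ a) (hb : 0 < b) (hc : 0 ≤ c) (hp : 0 < p)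
    (habc : b - a ≤ c) : b ^ p - a ^ p ≤ max 2 (2 * p) * c * b ^ (p - 1) := by
  have hM : (0 : ℝ) ≤ max 1 p := le_trans zero_le_one (le_max_left _ _)
  have hmax : max 2 (2 * p) = 2 * max 1 p := by
    rw [mul_max_of_nonneg _ _ (by norm_num : (0 : ℝ) ≤ 2), mul_one]
  have hB : 0 < b ^ (p - 1) := Real.rpow_pos_of_pos hb _
  have hR : 0 ≤ max 1 p * c * b ^ (p - 1) := by positivity
  rw [hmax]
  rcases le_total a b with hab | hab
  · have hbp : b ^ p = b ^ (p - 1) * b := by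
      rw [Real.rpow_sub_one hb.ne', div_mul_cancel₀ _ hb.ne']
    have h := one_sub_rpow_le (p := p) (div_nonneg ha hb.le) ((div_le_one hb).2 hab)
    rw [Real.div_rpow ha hb.le] at h
    calc b ^ p - a ^ p = b ^ p * (1 - a ^ p / b ^ p) := by
          have := (Real.rpow_pos_of_pos hb p).ne'
          field_simp
      _ ≤ b ^ p * (max 1 p * (1 - a / b)) := by gcongr
      _ = max 1 p * (b - a) * b ^ (p - 1) := by
          rw [hbp]
          field_simp
      _ ≤ max 1 p * c * b ^ (p - 1) := by gcongr
      _ ≤ 2 * max 1 p * c * b ^ (p - 1) := by linarith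
  · have := Real.rpow_le_rpow hb.le hab hp.le
    linarith

/-- Let `α ∈ (0,1]`, `d > α`, and let `x, y ∈ ℝ^d` satisfy `xᵢ > 0`, `yᵢ > 0`, `x ≠ y`. Then
`|x̂ − y|^(d−α) − |x − y|^(d−α) ≤ max(2, 2(d−α)) · |x − x̂| · |x̂ − y|^(d−α−1)`. -/
theorem stmt_2 (d : ℕ) (α : ℝ) (hα0 : 0 < α) (hα1 : α ≤ 1) (hd : α < (d : ℝ))
    (i : Fin d) (x y : EuclideanSpace ℝ (Fin d))
    (hx : 0 < x i) (hy : 0 < y i) (hxy : x ≠ y) :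
    ‖reflectHyp d i x - y‖ ^ ((d : ℝ) - α) - ‖x - y‖ ^ ((d : ℝ) - α) ≤
      max 2 (2 * ((d : ℝ) - α)) * ‖x - reflectHyp d i x‖ *
        ‖reflectHyp d i x - y‖ ^ ((d : ℝ) - α - 1) := by
  have hb : 0 < ‖reflectHyp d i x - y‖ := by
    rw [norm_pos_iff]
    intro h
    have h' := congrArg (fun v : EuclideanSpace ℝ (Fin d) => v i) h
    simp [reflectHyp] at h'
    linarith
  refine rpow_sub_rpow_le (norm_nonneg _) hb (norm_nonneg _) (by linarith) ?_
  have h := norm_sub_norm_le (reflectHyp d i x - y) (x - y)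
  rwa [sub_sub_sub_cancel_right, norm_sub_rev (reflectHyp d i x) x] at h
end

section
/- Fix r > 0. For all real x, y with 0 < x < r, 0 < y < r and x ≠ y, one has 0 ≤ G_r(x,y) − G_r(−x,y) ≤ (1/π) · min( 4x/|x − y| , log( 2(x + y)/|x − y| ) ). -/
/-!
Put `k = (x + y) / |x - y| ≥ 1`. Since `r² - x²` is even in `x`, `w_r(x,y) = k² w_r(-x,y)`.
The function `w ↦ √w + √(1 + w)` is increasing, which gives the lower bound, and it grows by a
factor of at most `k` when `w` is multiplied by `k²` (`sqrt_add_sqrt_scale`). Hence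
`π (G_r(x,y) - G_r(-x,y)) ≤ log k`, which is at most `log (2k)` and at most
`k - 1 = 2 min(x,y) / |x - y| ≤ 4x / |x - y|`.
-/

/-- `w_r(x,y) = (r² − x²)(r² − y²)/(r²(x − y)²)`. -/
noncomputable def wGreen (r x y : ℝ) : ℝ :=
  (r ^ 2 - x ^ 2) * (r ^ 2 - y ^ 2) / (r ^ 2 * (x - y) ^ 2)

/-- The Green function of the interval `(−r, r)` for the Cauchy process:
`G_r(x,y) = (1/π) log(√(w_r(x,y)) + √(1 + w_r(x,y)))`. -/
noncomputable def GGreen (r x y : ℝ) : ℝ :=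
  (1 / Real.pi) * Real.log (Real.sqrt (wGreen r x y) + Real.sqrt (1 + wGreen r x y))

/-- For `k ≥ 1`, scaling `w` by `k²` scales `√w + √(1 + w)` by at most `k`. -/
lemma sqrt_add_sqrt_scale {k w : ℝ} (hk : 1 ≤ k) :
    Real.sqrt (k ^ 2 * w) + Real.sqrt (1 + k ^ 2 * w) ≤
      k * (Real.sqrt w + Real.sqrt (1 + w)) := by
  have hk0 : 0 ≤ k := by linarith
  have h1 : Real.sqrt (k ^ 2 * w) = k * Real.sqrt w := by
    rw [Real.sqrt_mul (sq_nonneg k), Real.sqrt_sq hk0]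
  have h2 : Real.sqrt (1 + k ^ 2 * w) ≤ k * Real.sqrt (1 + w) := by
    calc Real.sqrt (1 + k ^ 2 * w) ≤ Real.sqrt (k ^ 2 * (1 + w)) := by
          apply Real.sqrt_le_sqrt
          nlinarith
      _ = k * Real.sqrt (1 + w) := by rw [Real.sqrt_mul (sq_nonneg k), Real.sqrt_sq hk0]
  rw [h1, mul_add]
  linarith

/-- For `0 < x < r`, `0 < y < r`, `x ≠ y`:
`0 ≤ G_r(x,y) − G_r(−x,y) ≤ (1/π) · min(4x/|x−y|, log(2(x+y)/|x−y|))`. -/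
theorem stmt_8 (r x y : ℝ) (hr : 0 < r) (hx0 : 0 < x) (hxr : x < r)
    (hy0 : 0 < y) (hyr : y < r) (hxy : x ≠ y) :
    0 ≤ GGreen r x y - GGreen r (-x) y ∧
    GGreen r x y - GGreen r (-x) y ≤
      (1 / Real.pi) * min (4 * x / |x - y|) (Real.log (2 * (x + y) / |x - y|)) := by
  have ha : 0 < |x - y| := abs_pos.mpr (sub_ne_zero.mpr hxy)
  have hab : |x - y| ≤ x + y := abs_le.mpr ⟨by linarith, by linarith⟩
  set k : ℝ := (x + y) / |x - y| with hk
  have hk1 : 1 ≤ k := (one_le_div ha).mpr hab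
  have hw0 : 0 ≤ wGreen r (-x) y := by
    have h1 : 0 ≤ r ^ 2 - x ^ 2 := by nlinarith
    have h2 : 0 ≤ r ^ 2 - y ^ 2 := by nlinarith
    unfold wGreen
    rw [neg_sq]
    positivity
  have hw : wGreen r x y = k ^ 2 * wGreen r (-x) y := by
    have hs : x - y ≠ 0 := sub_ne_zero.mpr hxy
    have hb : x + y ≠ 0 := by positivity
    have he : (-x - y) ^ 2 = (x + y) ^ 2 := by ring
    unfold wGreen
    rw [hk, div_pow, sq_abs, neg_sq, he]
    field_simp
  have hmono : wGreen r (-x) y ≤ wGreen r x y := by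
    rw [hw]
    exact le_mul_of_one_le_left hw0 (one_le_pow₀ hk1)
  have hscale := sqrt_add_sqrt_scale (w := wGreen r (-x) y) hk1
  rw [← hw] at hscale
  unfold GGreen
  rw [← mul_sub]
  set A := Real.sqrt (wGreen r x y) + Real.sqrt (1 + wGreen r x y) with hA
  set B := Real.sqrt (wGreen r (-x) y) + Real.sqrt (1 + wGreen r (-x) y) with hB
  have hB0 : 0 < B := by
    have : 0 < Real.sqrt (1 + wGreen r (-x) y) := Real.sqrt_pos.mpr (by linarith)
    positivity
  have hBA : B ≤ A :=
    add_le_add (Real.sqrt_le_sqrt hmono) (Real.sqrt_le_sqrt (by linarith))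
  have hk0 : 0 < k := by linarith
  have hlog : Real.log A - Real.log B ≤ Real.log k := by
    have h := Real.log_le_log (hB0.trans_le hBA) hscale
    rw [Real.log_mul hk0.ne' hB0.ne'] at h
    linarith
  constructor
  · exact mul_nonneg (by positivity) (sub_nonneg.mpr (Real.log_le_log hB0 hBA))
  · refine mul_le_mul_of_nonneg_left (hlog.trans (le_min ?_ ?_)) (by positivity)
    · refine (Real.log_le_sub_one_of_pos hk0).trans ?_
      rw [hk, div_sub_one ha.ne']
      gcongr
      linarith [neg_le_abs (x - y)]
    · apply Real.log_le_log hk0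
      rw [mul_div_assoc, ← hk]
      linarith
end

section
/- Fix r > 0. For all real x, y with 0 < x < r/2, 0 < y < r/2 and x ≠ y, one has G_r(x,y) − G_r(−x,y) ≥ (1/π) · min( 2x/(15|x − y|) , log( (x + y)/(4|x − y|) ) ). -/
/-- For `0 < x < r/2`, `0 < y < r/2`, `x ≠ y`:
`G_r(x,y) − G_r(−x,y) ≥ (1/π) · min(2x/(15|x−y|), log((x+y)/(4|x−y|)))`. -/
theorem stmt_9 (r x y : ℝ) (hr : 0 < r) (hx0 : 0 < x) (hxr : x < r / 2)
    (hy0 : 0 < y) (hyr : y < r / 2) (hxy : x ≠ y) :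
    GGreen r x y - GGreen r (-x) y ≥
      (1 / Real.pi) * min (2 * x / (15 * |x - y|)) (Real.log ((x + y) / (4 * |x - y|))) := by
  have hd : 0 < |x - y| := abs_pos.mpr (sub_ne_zero.mpr hxy)
  have hs : 0 < x + y := by linarith
  have hk : 0 < (x + y) / |x - y| := by positivity
  have hw1 : wGreen r x y = ((x + y) / |x - y|) ^ 2 * wGreen r (-x) y := by
    have h1 : x - y ≠ 0 := sub_ne_zero.mpr hxy
    have h2 : -x - y ≠ 0 := by linarith
    unfold wGreen
    rw [div_pow, sq_abs]
    field_simp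
    ring
  have hw2 : (1 / 2 : ℝ) ^ 2 ≤ wGreen r (-x) y := by
    have h2 : 0 < (-x - y) ^ 2 := by nlinarith
    unfold wGreen
    rw [le_div_iff₀ (by positivity)]
    have hx : 3 / 4 * r ^ 2 ≤ r ^ 2 - (-x) ^ 2 := by nlinarith
    have hy : 3 / 4 * r ^ 2 ≤ r ^ 2 - y ^ 2 := by nlinarith
    have h3 : (-x - y) ^ 2 ≤ r ^ 2 := by nlinarith
    have h4 := mul_le_mul hx hy (by positivity) (le_trans (by positivity) hx)
    nlinarith [mul_le_mul_of_nonneg_left h3 (sq_nonneg r), sq_nonneg (r ^ 2)]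
  set k := (x + y) / |x - y| with hkdef
  set w := wGreen r (-x) y
  have hw0 : 0 ≤ w := le_trans (by positivity) hw2
  have ha : 1 / 2 ≤ √w := Real.le_sqrt_of_sq_le hw2
  have hb : √(1 + w) ≤ 1 + √w := by
    rw [Real.sqrt_le_left (by positivity)]
    nlinarith [Real.sq_sqrt hw0]
  have hkw : √(k ^ 2 * w) = k * √w := by
    rw [Real.sqrt_mul (by positivity), Real.sqrt_sq hk.le]
  have hmain : k / 4 * (√w + √(1 + w)) ≤ √(k ^ 2 * w) + √(1 + k ^ 2 * w) := by
    rw [hkw]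
    nlinarith [Real.sqrt_nonneg (1 + k ^ 2 * w)]
  have hpos : 0 < √w + √(1 + w) := by positivity
  have hlog := Real.log_le_log (by positivity) hmain
  rw [Real.log_mul (by positivity) hpos.ne'] at hlog
  have hk4 : (x + y) / (4 * |x - y|) = k / 4 := by
    rw [hkdef]; field_simp
  unfold GGreen
  rw [hw1, hk4, ← mul_sub, ge_iff_le]
  refine mul_le_mul_of_nonneg_left ((min_le_right _ _).trans ?_) (by positivity)
  linarith
end

section
/- Fix r > 0. For all real x, y with 0 < x < r/4 and 2x < y < r/2, one has G_r(x,y) − G_r(−x,y) ≥ (2/(15π)) · x/(y − x). -/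
/-- Closed form of the Green function to the left of the diagonal. -/
lemma GGreen_eq {r u y : ℝ} (hr : 0 < r) (hu : -r < u) (huy : u < y) (hy : y < r) :
    GGreen r u y = (1 / Real.pi) *
      Real.log ((Real.sqrt ((r ^ 2 - u ^ 2) * (r ^ 2 - y ^ 2)) + (r ^ 2 - u * y)) /
        (r * (y - u))) := by
  have hd : 0 < r * (y - u) := mul_pos hr (by linarith)
  have hden : r ^ 2 * (u - y) ^ 2 = (r * (y - u)) ^ 2 := by ring
  have hnum : 0 ≤ r ^ 2 - u * y := by nlinarith
  have h1 : Real.sqrt (wGreen r u y) =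
      Real.sqrt ((r ^ 2 - u ^ 2) * (r ^ 2 - y ^ 2)) / (r * (y - u)) := by
    rw [wGreen, hden, Real.sqrt_div' _ (sq_nonneg _), Real.sqrt_sq hd.le]
  have h2 : 1 + wGreen r u y = ((r ^ 2 - u * y) / (r * (y - u))) ^ 2 := by
    rw [wGreen, hden, div_pow, eq_div_iff (by positivity), add_mul,
      div_mul_cancel₀ _ (by positivity)]
    ring
  rw [GGreen, h1, h2, Real.sqrt_sq (div_nonneg hnum hd.le), ← add_div]

/-- For `0 < x < r/4` and `2x < y < r/2`:
`G_r(x,y) − G_r(−x,y) ≥ (2/(15π)) · x/(y − x)`. -/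
theorem stmt_10 (r x y : ℝ) (hr : 0 < r) (hx0 : 0 < x) (hxr : x < r / 4)
    (hy0 : 2 * x < y) (hyr : y < r / 2) :
    GGreen r x y - GGreen r (-x) y ≥ (2 / (15 * Real.pi)) * (x / (y - x)) := by
  rw [GGreen_eq hr (by linarith) (by linarith) (by linarith),
    GGreen_eq hr (by linarith) (by linarith) (by linarith), neg_sq]
  set S := Real.sqrt ((r ^ 2 - x ^ 2) * (r ^ 2 - y ^ 2))
  have hS : 0 ≤ S := Real.sqrt_nonneg _
  have hyx : 0 < y - x := by linarith
  have hyx' : 0 < y - -x := by linarith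
  have hxy : 0 < x * y := mul_pos hx0 (by linarith)
  have hry : 4 * y ^ 2 < r ^ 2 := by nlinarith
  have hxyy : x * y < y ^ 2 := by nlinarith
  have hP : 0 < S + (r ^ 2 - x * y) := by nlinarith
  have hQ : 0 < S + (r ^ 2 - -x * y) := by nlinarith
  have hp : 0 < (S + (r ^ 2 - x * y)) / (r * (y - x)) := by positivity
  have hq : 0 < (S + (r ^ 2 - -x * y)) / (r * (y - -x)) := by positivity
  rw [← mul_sub, ← Real.log_div hp.ne' hq.ne']
  have hlog := Real.one_sub_inv_le_log_of_pos (div_pos hp hq)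
  have key : 2 / 15 * (x / (y - x)) ≤
      1 - ((S + (r ^ 2 - x * y)) / (r * (y - x)) /
        ((S + (r ^ 2 - -x * y)) / (r * (y - -x))))⁻¹ := by
    have e : 1 - ((S + (r ^ 2 - x * y)) / (r * (y - x)) /
        ((S + (r ^ 2 - -x * y)) / (r * (y - -x))))⁻¹ =
        2 * x * (S + r ^ 2 - y ^ 2) / ((S + (r ^ 2 - x * y)) * (y - -x)) := by
      field_simp
      ring
    rw [e, div_mul_div_comm, div_le_div_iff₀ (by positivity) (by positivity)]
    have h5 : S + (r ^ 2 - x * y) ≤ 5 * (S + r ^ 2 - y ^ 2) := by nlinarith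
    have h3 : y - -x ≤ 3 * (y - x) := by linarith
    have h15 := mul_le_mul h5 h3 hyx'.le (by linarith)
    nlinarith [mul_le_mul_of_nonneg_left h15 hx0.le]
  calc 2 / (15 * Real.pi) * (x / (y - x))
      = 1 / Real.pi * (2 / 15 * (x / (y - x))) := by
        rw [← div_div]; ring
    _ ≤ _ := mul_le_mul_of_nonneg_left (key.trans hlog) (by positivity)
end

section
/- Let d ∈ ℕ, α ∈ (0,1), x₀ ∈ ℝ^d, r > 0 and A ≥ 0. Suppose u : ℝ^d → ℝ is measurable, ∫_{ℝ^d} |u(y)|/(1 + |y|)^(d+α) dy < ∞, and u is differentiable at every point of B(x₀, r) with ‖∇u(z)‖ ≤ A for all z ∈ B(x₀, r). Then the function x ↦ ∫_{ℝ^d} (u(y) − u(x))/|y − x|^(d+α) dy is continuous on B(x₀, r/2). -/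
open MeasureTheory

/-!
The integrand is split with a continuous cutoff `cut δ`, equal to `1` for `|h| ≤ δ/2` and to `0`
for `|h| ≥ δ`, where `δ = r/2`.

* Near part: after the translation `y = x + h` it is
  `∫ cut δ h * ((u (x + h) - u x) / |h|^(d+α)) dh`. For `x ∈ B(x₀, r/2)` only points `x + h` of
  `B(x₀, r)` matter, and there the mean value inequality bounds the integrand by
  `A |h|^(-(d+α-1))`, which is integrable on `B(0, δ)` because `α < 1`.
* Far part: it is `∫ (1 - cut δ (y - x)) * ((u y - u x) / |y - x|^(d+α)) dy`, where only
  `|y - x| ≥ δ/2` matters. There `1 + |y| ≤ K |y - x|` with `K` independent of `x`, so the integrand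
  is bounded by a multiple of `(|u y| + 1) / (1 + |y|)^(d+α)`.

Both integrands are continuous in `x`, so dominated convergence applies to each part. Using a
continuous cutoff instead of an indicator makes the continuity hold for every `h` and every `y`.
In dimension `0` the space is a single point and nothing is to be proved.
-/

/-- A continuous radial cutoff: `1` on `|h| ≤ δ/2`, `0` on `|h| ≥ δ`, affine in `|h|` between. -/
noncomputable def cut {E : Type*} [NormedAddCommGroup E] (δ : ℝ) (h : E) : ℝ :=
  max 0 (min 1 (2 - 2 * ‖h‖ / δ))

section cut

variable {E : Type*} [NormedAddCommGroup E] {δ : ℝ}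

lemma cut_continuous : Continuous (cut δ : E → ℝ) := by
  unfold cut; fun_prop

lemma cut_nonneg (h : E) : 0 ≤ cut δ h := le_max_left _ _

lemma cut_le_one (h : E) : cut δ h ≤ 1 := max_le zero_le_one (min_le_left _ _)

lemma cut_eq_zero (hδ : 0 < δ) {h : E} (hh : δ ≤ ‖h‖) : cut δ h = 0 := by
  have : 2 - 2 * ‖h‖ / δ ≤ 0 := by
    rw [sub_nonpos, le_div_iff₀ hδ]; linarith
  exact max_eq_left ((min_le_right _ _).trans this)

lemma cut_eq_one (hδ : 0 < δ) {h : E} (hh : ‖h‖ ≤ δ / 2) : cut δ h = 1 := by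
  have : 1 ≤ 2 - 2 * ‖h‖ / δ := by
    have : 2 * ‖h‖ / δ ≤ 1 := by rw [div_le_iff₀ hδ]; linarith
    linarith
  unfold cut
  rw [min_eq_left this]; simp

/-- The far kernel has no singularity: truncating `|t|` from below at `δ/2` does not change it,
and in the truncated form it is visibly continuous. -/
lemma far_kernel_eq (hδ : 0 < δ) (s : ℝ) (t : E) :
    (1 - cut δ t) / ‖t‖ ^ s = (1 - cut δ t) / (max ‖t‖ (δ / 2)) ^ s := by
  rcases le_total ‖t‖ (δ / 2) with h | h
  · simp [cut_eq_one hδ h]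
  · rw [max_eq_left h]

lemma far_kernel_continuous (hδ : 0 < δ) (s : ℝ) :
    Continuous (fun t : E => (1 - cut δ t) / ‖t‖ ^ s) := by
  simp_rw [far_kernel_eq hδ s]
  have hpos : ∀ t : E, 0 < max ‖t‖ (δ / 2) := fun t => lt_max_of_lt_right (by linarith)
  refine (continuous_const.sub cut_continuous).div ?_ fun t => (Real.rpow_pos_of_pos (hpos t) s).ne'
  exact Continuous.rpow_const (by fun_prop) fun t => Or.inl (hpos t).ne'

end cut

theorem stmt_17 (d : ℕ) (α : ℝ) (hα0 : 0 < α) (hα1 : α < 1)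
    (x₀ : EuclideanSpace ℝ (Fin d)) (r A : ℝ) (hr : 0 < r) (hA : 0 ≤ A)
    (u : EuclideanSpace ℝ (Fin d) → ℝ) (hu : Measurable u)
    (hint : Integrable (fun y : EuclideanSpace ℝ (Fin d) =>
      |u y| / (1 + ‖y‖) ^ ((d : ℝ) + α)))
    (hdiff : ∀ z ∈ Metric.ball x₀ r, DifferentiableAt ℝ u z ∧ ‖fderiv ℝ u z‖ ≤ A) :
    ContinuousOn (fun x : EuclideanSpace ℝ (Fin d) =>
        ∫ y : EuclideanSpace ℝ (Fin d), (u y - u x) / ‖y - x‖ ^ ((d : ℝ) + α))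
      (Metric.ball x₀ (r / 2)) := by
  rcases Nat.eq_zero_or_pos d with hd | hd
  · subst hd
    exact (continuous_of_const fun x y => by rw [Subsingleton.elim x y]).continuousOn
  set s : ℝ := (d : ℝ) + α with hs
  have hs0 : 0 < s := by positivity
  set δ : ℝ := r / 2 with hδdef
  have hδ : 0 < δ := by positivity
  have hsub : Metric.ball x₀ δ ⊆ Metric.ball x₀ r := Metric.ball_subset_ball (by linarith)
  have hadd : ∀ x ∈ Metric.ball x₀ δ, ∀ h : EuclideanSpace ℝ (Fin d), ‖h‖ < δ → x + h ∈ Metric.ball x₀ r := by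
    intro x hx h hh
    rw [mem_ball_iff_norm] at hx ⊢
    calc ‖x + h - x₀‖ = ‖(x - x₀) + h‖ := by congr 1; abel
      _ ≤ ‖x - x₀‖ + ‖h‖ := norm_add_le _ _
      _ < r := by linarith
  have hlip : ∀ x ∈ Metric.ball x₀ r, ∀ y ∈ Metric.ball x₀ r, |u y - u x| ≤ A * ‖y - x‖ :=
    fun x hx y hy => (convex_ball x₀ r).norm_image_sub_le_of_norm_fderiv_le
      (fun z hz => (hdiff z hz).1) (fun z hz => (hdiff z hz).2) hx hy
  have hucont : ∀ z ∈ Metric.ball x₀ r, ContinuousAt u z := fun z hz => (hdiff z hz).1.continuousAt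
  -- near part, in the variable `h = y - x`, and its dominating function
  let N : EuclideanSpace ℝ (Fin d) → EuclideanSpace ℝ (Fin d) → ℝ := fun x h => cut δ h * ((u (x + h) - u x) / ‖h‖ ^ s)
  let bN : EuclideanSpace ℝ (Fin d) → ℝ := (Metric.ball (0 : EuclideanSpace ℝ (Fin d)) δ).indicator fun h => A * ‖h‖ ^ (-(s - 1))
  have hNmeas : ∀ x, AEStronglyMeasurable (N x) volume := fun x => by
    have := (cut_continuous (E := EuclideanSpace ℝ (Fin d)) (δ := δ)).measurable
    exact Measurable.aestronglyMeasurable (by fun_prop)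
  have hNbound : ∀ x ∈ Metric.ball x₀ δ, ∀ h, ‖N x h‖ ≤ bN h := by
    intro x hx h
    rcases lt_or_ge ‖h‖ δ with hh | hh
    · have hmem : h ∈ Metric.ball (0 : EuclideanSpace ℝ (Fin d)) δ := by simpa using hh
      simp only [N, bN, Set.indicator_of_mem hmem]
      have h1 := hlip x (hsub hx) (x + h) (hadd x hx h hh)
      rw [add_sub_cancel_left] at h1
      rcases eq_or_ne h 0 with rfl | h0
      · simp only [add_zero, sub_self, zero_div, mul_zero, norm_zero]
        positivity
      have hp : 0 < ‖h‖ := norm_pos_iff.2 h0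
      have h2 : ‖h‖ ^ (-(s - 1)) = ‖h‖ / ‖h‖ ^ s := by
        rw [neg_sub, Real.rpow_sub hp, Real.rpow_one]
      rw [h2, norm_mul, norm_div, Real.norm_of_nonneg (cut_nonneg h), Real.norm_eq_abs,
        Real.norm_of_nonneg (by positivity : 0 ≤ ‖h‖ ^ s)]
      calc cut δ h * (|u (x + h) - u x| / ‖h‖ ^ s)
          ≤ 1 * (A * ‖h‖ / ‖h‖ ^ s) := by
            gcongr
            exact cut_le_one h
        _ = A * (‖h‖ / ‖h‖ ^ s) := by ring
    · have hmem : h ∉ Metric.ball (0 : EuclideanSpace ℝ (Fin d)) δ := by simpa using hh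
      simp [N, bN, Set.indicator_of_notMem hmem, cut_eq_zero hδ hh]
  have hbN : Integrable bN := by
    refine IntegrableOn.integrable_indicator ?_ measurableSet_ball
    refine integrableOn_ball_of_norm_le_rpow (C := A) (α := s - 1) ?_ ?_ ?_ ?_
    · rw [finrank_euclideanSpace_fin]; exact hd
    · simp [hs]; linarith
    · refine Filter.Eventually.of_forall fun h => ?_
      rw [Real.norm_of_nonneg (by positivity)]
    · exact Measurable.aestronglyMeasurable (by fun_prop)
  have hNcont : ∀ h, ContinuousOn (fun x => N x h) (Metric.ball x₀ δ) := by
    intro h x hx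
    rcases lt_or_ge ‖h‖ δ with hh | hh
    · have c1 : ContinuousAt (fun x => u (x + h)) x :=
        ContinuousAt.comp (f := fun x => x + h) (hucont _ (hadd x hx h hh)) (by fun_prop)
      have c2 := hucont x (hsub hx)
      exact (continuousAt_const.mul ((c1.sub c2).div_const _)).continuousWithinAt
    · simp only [N, cut_eq_zero hδ hh, zero_mul]
      exact continuousWithinAt_const
  -- far part, in the variable `y`; `U` bounds `|u|` on `B(x₀, δ)`
  let F : EuclideanSpace ℝ (Fin d) → EuclideanSpace ℝ (Fin d) → ℝ := fun x y => (1 - cut δ (y - x)) / ‖y - x‖ ^ s * (u y - u x)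
  let U : ℝ := |u x₀| + A * δ
  -- the constant `K` with `1 + |y| ≤ K |y - x|` whenever `|y - x| ≥ δ/2` and `x ∈ B(x₀, δ)`
  let K : ℝ := 1 + (1 + ‖x₀‖ + δ) / (δ / 2)
  have hK : 0 < K := by positivity
  let bF : EuclideanSpace ℝ (Fin d) → ℝ := fun y => K ^ s * (|u y| / (1 + ‖y‖) ^ s + U * (1 + ‖y‖) ^ (-s))
  have hFmeas : ∀ x, AEStronglyMeasurable (F x) volume := fun x => by
    have := (far_kernel_continuous (E := EuclideanSpace ℝ (Fin d)) hδ s).measurable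
    exact ((this.comp (measurable_id.sub_const x)).mul (hu.sub_const _)).aestronglyMeasurable
  have hU : ∀ x ∈ Metric.ball x₀ δ, |u x| ≤ U := by
    intro x hx
    have h1 := hlip x₀ (Metric.mem_ball_self hr) x (hsub hx)
    rw [mem_ball_iff_norm] at hx
    have h2 : A * ‖x - x₀‖ ≤ A * δ := by gcongr
    have h3 := abs_sub_abs_le_abs_sub (u x) (u x₀)
    simp only [U]; linarith
  have hFbound : ∀ x ∈ Metric.ball x₀ δ, ∀ y, ‖F x y‖ ≤ bF y := by
    intro x hx y
    have hUx := hU x hx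
    have hU0 : 0 ≤ U := (abs_nonneg _).trans hUx
    rcases le_total ‖y - x‖ (δ / 2) with h | h
    · simp only [F, cut_eq_one hδ h, sub_self, zero_div, zero_mul, norm_zero, bF]
      positivity
    have hp : 0 < ‖y - x‖ := by linarith
    have hx' : ‖x‖ ≤ ‖x₀‖ + δ := by
      rw [mem_ball_iff_norm] at hx
      have := norm_sub_norm_le x x₀
      linarith
    have hy : 1 + ‖y‖ ≤ K * ‖y - x‖ := by
      have h1 : ‖y‖ ≤ ‖y - x‖ + ‖x‖ := by simpa using norm_add_le (y - x) x
      have h2 : 1 + ‖x₀‖ + δ ≤ (1 + ‖x₀‖ + δ) / (δ / 2) * ‖y - x‖ := by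
        rw [div_mul_eq_mul_div, le_div_iff₀ (by positivity)]
        gcongr
      simp only [K, add_mul, one_mul] at *
      linarith
    have hpow : 1 / ‖y - x‖ ^ s ≤ K ^ s / (1 + ‖y‖) ^ s := by
      rw [div_le_div_iff₀ (by positivity) (by positivity), one_mul, ← Real.mul_rpow hK.le hp.le]
      gcongr
    have hc0 := cut_nonneg (δ := δ) (y - x)
    have hc1 := cut_le_one (δ := δ) (y - x)
    have hker : ‖(1 - cut δ (y - x)) / ‖y - x‖ ^ s‖ ≤ K ^ s / (1 + ‖y‖) ^ s := by
      rw [Real.norm_of_nonneg (div_nonneg (by linarith) (by positivity))]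
      refine le_trans ?_ hpow
      gcongr
      linarith
    have hdiff' : ‖u y - u x‖ ≤ |u y| + U := (norm_sub_le _ _).trans (add_le_add le_rfl hUx)
    calc ‖F x y‖ = ‖(1 - cut δ (y - x)) / ‖y - x‖ ^ s‖ * ‖u y - u x‖ := norm_mul _ _
      _ ≤ K ^ s / (1 + ‖y‖) ^ s * (|u y| + U) := by gcongr
      _ = bF y := by
        simp only [bF]
        rw [Real.rpow_neg (by positivity)]
        ring
  have hbF : Integrable bF := by
    refine (hint.add ((integrable_one_add_norm ?_).const_mul U)).const_mul _
    simp [hs, hα0]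
  have hFcont : ∀ y, ContinuousOn (fun x => F x y) (Metric.ball x₀ δ) := by
    intro y x hx
    have c1 : ContinuousAt (fun x => (1 - cut δ (y - x)) / ‖y - x‖ ^ s) x :=
      ((far_kernel_continuous (E := EuclideanSpace ℝ (Fin d)) hδ s).comp (continuous_const.sub continuous_id)).continuousAt
    exact (c1.mul (continuousAt_const.sub (hucont x (hsub hx)))).continuousWithinAt
  have cN := continuousOn_of_dominated (fun x _ => hNmeas x)
    (fun x hx => Filter.Eventually.of_forall (hNbound x hx)) hbN (Filter.Eventually.of_forall hNcont)
  have cF := continuousOn_of_dominated (fun x _ => hFmeas x)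
    (fun x hx => Filter.Eventually.of_forall (hFbound x hx)) hbF (Filter.Eventually.of_forall hFcont)
  refine (cN.add cF).congr fun x hx => ?_
  have iN : Integrable (N x) := hbN.mono' (hNmeas x) (.of_forall (hNbound x hx))
  have iF : Integrable (F x) := hbF.mono' (hFmeas x) (.of_forall (hFbound x hx))
  have e : ∫ h, N x h = ∫ y, N x (y - x) := (integral_sub_right_eq_self (N x) x).symm
  simp only [Pi.add_apply]
  rw [e, ← integral_add (iN.comp_sub_right x) iF]
  congr 1
  ext y
  simp only [N, F, add_sub_cancel]
  ring
end

section
/- Let d ∈ ℕ, i ∈ {1,…,d}, and let x, y ∈ ℝ^d satisfy xᵢ > 0, |x| < 1/4, 2|x| < yᵢ < 1/2 and |y| < √2 · yᵢ. Then min( xᵢ·yᵢ / (4|x − y|²) , 1 ) ≥ xᵢ / (16 |x̂ − y|) = |x − x̂| / (32 |x̂ − y|). -/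
/-- Let `x, y ∈ ℝ^d` satisfy `xᵢ > 0`, `|x| < 1/4`, `2|x| < yᵢ < 1/2`, `|y| < √2·yᵢ`. Then
`min(xᵢyᵢ/(4|x−y|²), 1) ≥ xᵢ/(16|x̂−y|) = |x−x̂|/(32|x̂−y|)`. -/
theorem stmt_19 (d : ℕ) (i : Fin d) (x y : EuclideanSpace ℝ (Fin d))
    (hxi : 0 < x i) (hx : ‖x‖ < 1/4)
    (hy1 : 2 * ‖x‖ < y i) (hy2 : y i < 1/2) (hy3 : ‖y‖ < Real.sqrt 2 * y i) :
    min (x i * y i / (4 * ‖x - y‖ ^ 2)) 1 ≥ x i / (16 * ‖reflectHyp d i x - y‖) ∧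
    x i / (16 * ‖reflectHyp d i x - y‖) =
      ‖x - reflectHyp d i x‖ / (32 * ‖reflectHyp d i x - y‖) := by
  have hyx : x i ≤ ‖x‖ := (le_abs_self _).trans (PiLp.norm_apply_le x i)
  have hy0 : 0 < y i := by linarith [norm_nonneg x]
  have hR : x i + y i ≤ ‖reflectHyp d i x - y‖ := by
    have h := PiLp.norm_apply_le (reflectHyp d i x - y) i
    have e : (reflectHyp d i x - y) i = -(x i + y i) := by
      simp [reflectHyp]; ring
    rw [e, norm_neg] at h
    exact (le_abs_self _).trans h
  have hr0 : 0 < ‖x - y‖ := by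
    have h := PiLp.norm_apply_le (x - y) i
    have h2 : y i - x i ≤ ‖(x - y) i‖ := by
      rw [PiLp.sub_apply, Real.norm_eq_abs, abs_sub_comm]
      exact le_abs_self _
    linarith
  -- `|x - y| ≤ |x| + |y| < (1/2 + √2) yᵢ`, and `√2 < 3/2`
  have hr : ‖x - y‖ ≤ 2 * y i := by
    have hs : Real.sqrt 2 ≤ 3 / 2 := by
      rw [Real.sqrt_le_left (by norm_num)]; norm_num
    have := mul_le_mul_of_nonneg_right hs hy0.le
    linarith [norm_sub_le x y]
  have hd : ‖x - reflectHyp d i x‖ = 2 * x i := by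
    simp [reflectHyp, norm_smul, abs_of_pos hxi]
  rw [hd]
  generalize ‖reflectHyp d i x - y‖ = R at *
  have hR0 : 0 < R := by linarith
  refine ⟨le_min ?_ ?_, ?_⟩
  · rw [div_le_div_iff₀ (by positivity) (by positivity)]
    have h1 : ‖x - y‖ ^ 2 ≤ (2 * y i) ^ 2 := pow_le_pow_left₀ hr0.le hr 2
    have h2 : y i * y i ≤ y i * R := mul_le_mul_of_nonneg_left (by linarith) hy0.le
    have h3 : 4 * ‖x - y‖ ^ 2 ≤ y i * (16 * R) := by linarith
    rw [mul_assoc (x i)]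
    exact mul_le_mul_of_nonneg_left h3 hxi.le
  · rw [div_le_one (by positivity)]
    linarith
  · field_simp
    norm_num
end
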